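/- Fix γ ∈ (0,1). The restricted intensity density φ_γ is strictly increasing on [0,1/2] and strictly decreasing on [1/2,1]; that is, for all 0 ≤ x₁ < x₂ ≤ 1/2 one has φ_γ(x₁) < φ_γ(x₂), and for all 1/2 ≤ x₁ < x₂ ≤ 1 one has φ_γ(x₁) > φ_γ(x₂). -/

import Mathlib

open MeasureTheory Real

/-- The symmetric triangular density on `[0,1]` with support endpoints `y` and `z`. -/
noncomputable def triDens (y z x : ℝ) : ℝ :=
  (2 / |y - z|) * max 0 (1 - (2 / |y - z|) * |x - (y + z) / 2|)

/-- The region of admissible endpoint pairs for the restricted triangular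
distributions: pairs `(y,z) ∈ [0,1]²` with `|y−z| ≥ γ`. -/
def restrictedRegion (γ : ℝ) : Set (ℝ × ℝ) :=
  {p : ℝ × ℝ | p.1 ∈ Set.Icc (0 : ℝ) 1 ∧ p.2 ∈ Set.Icc (0 : ℝ) 1 ∧ γ ≤ |p.1 - p.2|}

/-- The density `φ_γ` of the intensity measure of a random restricted symmetric
triangular distribution with parameter `γ`. -/
noncomputable def phiGamma (γ x : ℝ) : ℝ :=
  ((1 - γ) ^ 2)⁻¹ * ∫ p in restrictedRegion γ, triDens p.1 p.2 x

/-!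
Let `R` be the region of admissible pairs and, for `x₁ < x₂ ≤ 1 / 2`, put `h = x₂ - x₁`.
Translating a triangle and its argument by `h` does not change the density, so the contributions to
`φ_γ(x₁)` of the pairs that stay in `R` under translation by `(h, h)` cancel against the
contributions to `φ_γ(x₂)` of their translates. The remaining pairs for `x₂` are the images under
`p ↦ (1, 1) - p` of the remaining pairs for `x₁`, hence
`φ_γ(x₂) - φ_γ(x₁)` is a positive multiple of the integral of `f_p(1 - x₂) - f_p(x₁)` over the pairs
`p` that leave `R`. Such pairs have midpoint above `(1 - h) / 2`, the midpoint of `x₁` and `1 - x₂`,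
so the integrand is nonnegative, and it is positive for pairs near the corner `(0, 1)`.
-/

section General

theorem abs_sub_lt_abs_sub_of_midpoint_lt {a b m : ℝ} (hab : a < b) (hm : (a + b) / 2 < m) :
    |b - m| < |a - m| := by
  rw [abs_lt, abs_of_neg (by linarith)]
  constructor <;> linarith

variable {α : Type*} [MeasurableSpace α] {μ : Measure α}

theorem setIntegral_lt_setIntegral_of_le_of_measure_lt_pos {s : Set α} {f g : α → ℝ}
    (hs : MeasurableSet s) (hf : IntegrableOn f s μ) (hg : IntegrableOn g s μ)
    (hle : ∀ a ∈ s, f a ≤ g a) (hlt : 0 < μ {a ∈ s | f a < g a}) :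
    ∫ a in s, f a ∂μ < ∫ a in s, g a ∂μ := by
  rw [← sub_pos, ← integral_sub' hg hf,
    setIntegral_pos_iff_support_of_nonneg_ae _ (hg.sub hf)]
  · exact hlt.trans_le (measure_mono fun a ha => ⟨(sub_pos.2 ha.2).ne', ha.1⟩)
  · exact (ae_restrict_mem hs).mono fun a ha => sub_nonneg.2 (hle a ha)

variable {G E : Type*} [AddCommGroup G] [MeasurableSpace G] [MeasurableAdd G]
  [NormedAddCommGroup E] [NormedSpace ℝ E] {ν : Measure G} [ν.IsAddLeftInvariant]

theorem setIntegral_comp_sub_left [MeasurableNeg G] [ν.IsNegInvariant] (f : G → E) (s : Set G)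
    (c : G) :
    ∫ p in (c - ·) ⁻¹' s, f (c - p) ∂ν = ∫ p in s, f p ∂ν :=
  (Measure.measurePreserving_sub_left ν c).setIntegral_preimage_emb
    (MeasurableEquiv.subLeft c).measurableEmbedding f s

theorem setIntegral_comp_add_right (f : G → E) (s : Set G) (v : G) :
    ∫ p in (· + v) ⁻¹' s, f (p + v) ∂ν = ∫ p in s, f p ∂ν :=
  (measurePreserving_add_right ν v).setIntegral_preimage_emb
    (measurableEmbedding_addRight v) f s

theorem setIntegral_sub_setIntegral_comp_add_right [MeasurableNeg G] [ν.IsNegInvariant]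
    {s : Set G} {c v : G} {f : G → E} (hs : MeasurableSet s)
    (hsymm : (c - ·) ⁻¹' s = s) (hf : IntegrableOn f s ν)
    (hfv : IntegrableOn (fun p => f (p + v)) s ν) :
    ∫ p in s, f p ∂ν - ∫ p in s, f (p + v) ∂ν =
      ∫ p in s \ (· + v) ⁻¹' s, f (c - p) ∂ν - ∫ p in s \ (· + v) ⁻¹' s, f (p + v) ∂ν := by
  have hmem (p : G) : c - p ∈ s ↔ p ∈ s := Set.ext_iff.1 hsymm p
  have stay : (· + v) ⁻¹' (s ∩ (· + -v) ⁻¹' s) = s ∩ (· + v) ⁻¹' s := by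
    ext p
    simp only [Set.mem_preimage, Set.mem_inter_iff, add_neg_cancel_right, and_comm]
  have leave : (c - ·) ⁻¹' (s \ (· + -v) ⁻¹' s) = s \ (· + v) ⁻¹' s := by
    ext p
    have : c - p + -v = c - (p + v) := by abel
    simp only [Set.mem_preimage, Set.mem_sdiff, this, hmem]
  rw [← integral_inter_add_sdiff (measurable_add_const (-v) hs) hf,
    ← integral_inter_add_sdiff (measurable_add_const v hs) hfv,
    ← setIntegral_comp_add_right f _ v, stay, ← setIntegral_comp_sub_left f _ c, leave,
    add_sub_add_left_eq_sub]

end General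

section TriangularDensity

variable {y z x x' : ℝ}

theorem triDens_nonneg (y z x : ℝ) : 0 ≤ triDens y z x := by
  unfold triDens
  positivity

theorem triDens_le_two_div (y z x : ℝ) : triDens y z x ≤ 2 / |y - z| :=
  mul_le_of_le_one_right (by positivity)
    (max_le zero_le_one (sub_le_self _ (by positivity)))

theorem triDens_add (y z x h : ℝ) : triDens (y + h) (z + h) (x + h) = triDens y z x := by
  have hmid : x + h - (y + h + (z + h)) / 2 = x - (y + z) / 2 := by ring
  simp only [triDens, add_sub_add_right_eq_sub, hmid]

theorem triDens_const_sub (c y z x : ℝ) :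
    triDens (c - y) (c - z) (c - x) = triDens y z x := by
  have hmid : c - x - (c - y + (c - z)) / 2 = (y + z) / 2 - x := by ring
  simp only [triDens, sub_sub_sub_cancel_left, hmid, abs_sub_comm z y, abs_sub_comm _ x]

theorem triDens_pos (hx : x ∈ Set.Ioo y z) : 0 < triDens y z x := by
  have hwidth : 0 < |y - z| := abs_pos.2 (sub_ne_zero.2 (hx.1.trans hx.2).ne)
  have hdist : |x - (y + z) / 2| < |y - z| / 2 := by
    rw [abs_sub_comm y z, abs_of_pos (sub_pos.2 (hx.1.trans hx.2)), abs_lt]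
    constructor <;> linarith [hx.1, hx.2]
  have hlt : 2 / |y - z| * |x - (y + z) / 2| < 1 := by
    rw [div_mul_eq_mul_div, div_lt_one hwidth]
    linarith
  exact mul_pos (by positivity) (lt_max_of_lt_right (sub_pos.2 hlt))

theorem triDens_le_triDens (h : |x - (y + z) / 2| ≤ |x' - (y + z) / 2|) :
    triDens y z x' ≤ triDens y z x := by
  unfold triDens
  gcongr

theorem triDens_lt_triDens (hx : 0 < triDens y z x)
    (h : |x - (y + z) / 2| < |x' - (y + z) / 2|) : triDens y z x' < triDens y z x := by
  have hslope : 0 < 2 / |y - z| := pos_of_mul_pos_left hx (le_max_left _ _)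
  refine mul_lt_mul_of_pos_left (max_lt (pos_of_mul_pos_right hx hslope.le) ?_) hslope
  exact lt_max_of_lt_right (by gcongr)

end TriangularDensity

section RestrictedRegion

variable {γ h : ℝ}

theorem measurableSet_restrictedRegion (γ : ℝ) : MeasurableSet (restrictedRegion γ) :=
  (measurable_fst measurableSet_Icc).inter ((measurable_snd measurableSet_Icc).inter
    (measurableSet_le measurable_const (measurable_fst.sub measurable_snd).abs))

theorem preimage_one_sub_restrictedRegion (γ : ℝ) :
    (((1, 1) : ℝ × ℝ) - ·) ⁻¹' restrictedRegion γ = restrictedRegion γ := by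
  ext ⟨y, z⟩
  simp only [restrictedRegion, Set.mem_preimage, Set.mem_ofPred_eq, Prod.mk_sub_mk,
    sub_sub_sub_cancel_left, abs_sub_comm z y, Set.sub_mem_Icc_iff_right, sub_self, sub_zero]

theorem integrableOn_triDens_restrictedRegion (hγ : 0 < γ) (x : ℝ) :
    IntegrableOn (fun p : ℝ × ℝ => triDens p.1 p.2 x) (restrictedRegion γ) := by
  have hsub : restrictedRegion γ ⊆ Set.Icc 0 1 ×ˢ Set.Icc 0 1 := fun p hp => ⟨hp.1, hp.2.1⟩
  have hfin : volume (restrictedRegion γ) ≠ ⊤ :=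
    ((measure_mono hsub).trans_lt (isCompact_Icc.prod isCompact_Icc).measure_lt_top).ne
  have hmeas : Measurable fun p : ℝ × ℝ => triDens p.1 p.2 x := by
    unfold triDens
    fun_prop
  refine Measure.integrableOn_of_bounded (M := 2 / γ) hfin hmeas.aestronglyMeasurable ?_
  filter_upwards [ae_restrict_mem (measurableSet_restrictedRegion γ)] with p hp
  rw [norm_of_nonneg (triDens_nonneg _ _ _)]
  exact (triDens_le_two_div _ _ _).trans (div_le_div_of_nonneg_left zero_le_two hγ hp.2.2)

/-- The admissible pairs that leave the restricted region when both endpoints are translated by `h`.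
Only these contribute to the increment of `φ_γ` over an interval of length `h`. -/
def exitRegion (γ h : ℝ) : Set (ℝ × ℝ) :=
  restrictedRegion γ \ (· + (h, h)) ⁻¹' restrictedRegion γ

theorem measurableSet_exitRegion (γ h : ℝ) : MeasurableSet (exitRegion γ h) :=
  (measurableSet_restrictedRegion γ).diff
    (measurable_add_const (h, h) (measurableSet_restrictedRegion γ))

theorem mem_exitRegion_iff (hh : 0 ≤ h) {p : ℝ × ℝ} :
    p ∈ exitRegion γ h ↔ p ∈ restrictedRegion γ ∧ 1 - h < max p.1 p.2 := by
  refine and_congr_right fun ⟨⟨hy₀, _⟩, ⟨hz₀, _⟩, hγ⟩ => ?_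
  rw [← not_le, not_iff_not, max_le_iff, le_sub_iff_add_le, le_sub_iff_add_le]
  refine ⟨fun hp => ⟨hp.1.2, hp.2.1.2⟩, fun ⟨hy, hz⟩ => ?_⟩
  exact ⟨⟨add_nonneg hy₀ hh, hy⟩, ⟨add_nonneg hz₀ hh, hz⟩, by simpa using hγ⟩

theorem one_sub_lt_add_of_mem_exitRegion (hh : 0 ≤ h) {p : ℝ × ℝ} (hp : p ∈ exitRegion γ h) :
    1 - h < p.1 + p.2 := by
  obtain ⟨⟨⟨hy, _⟩, ⟨hz, _⟩, _⟩, hmax⟩ := (mem_exitRegion_iff hh).1 hp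
  exact hmax.trans_le (max_le_add_of_nonneg hy hz)

theorem volume_exitRegion_straddling_pos {t : ℝ} (hγ : γ < 1) (hh : 0 < h)
    (ht : t ∈ Set.Icc (1 / 2) (1 - h)) :
    0 < volume {p ∈ exitRegion γ h | t ∈ Set.Ioo p.1 p.2} := by
  obtain ⟨ht₀, ht₁⟩ := ht
  obtain ⟨ε, hε, hεγ, hεh⟩ : ∃ ε > 0, ε ≤ (1 - γ) / 2 ∧ ε ≤ h :=
    ⟨min ((1 - γ) / 2) h, lt_min (by linarith) hh, min_le_left _ _, min_le_right _ _⟩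
  have hcorner : 0 < volume (Set.Ioo 0 ε ×ˢ Set.Ioo (1 - ε) 1) :=
    (isOpen_Ioo.prod isOpen_Ioo).measure_pos volume
      ((Set.nonempty_Ioo.2 hε).prod (Set.nonempty_Ioo.2 (by linarith)))
  refine hcorner.trans_le (measure_mono ?_)
  rintro ⟨y, z⟩ ⟨⟨hy₀, hyε⟩, ⟨hzε, hz₁⟩⟩
  dsimp only at hy₀ hyε hzε hz₁
  have hwidth : γ ≤ |y - z| := by linarith [neg_le_abs (y - z)]
  have hregion : (y, z) ∈ restrictedRegion γ :=
    ⟨⟨hy₀.le, by linarith⟩, ⟨by linarith, hz₁.le⟩, hwidth⟩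
  exact ⟨(mem_exitRegion_iff hh.le).2 ⟨hregion, lt_max_of_lt_right (by linarith)⟩,
    by linarith, by linarith⟩

end RestrictedRegion

section IntensityDensity

variable {γ x₁ x₂ : ℝ}

theorem integral_triDens_sub_integral_triDens (hγ : 0 < γ) (x₁ x₂ : ℝ) :
    (∫ p in restrictedRegion γ, triDens p.1 p.2 x₂) -
        ∫ p in restrictedRegion γ, triDens p.1 p.2 x₁ =
      (∫ p in exitRegion γ (x₂ - x₁), triDens p.1 p.2 (1 - x₂)) -
        ∫ p in exitRegion γ (x₂ - x₁), triDens p.1 p.2 x₁ := by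
  have htranslate (p : ℝ × ℝ) :
      triDens (p + (x₂ - x₁, x₂ - x₁)).1 (p + (x₂ - x₁, x₂ - x₁)).2 x₂ = triDens p.1 p.2 x₁ := by
    simpa using triDens_add p.1 p.2 x₁ (x₂ - x₁)
  have hreflect (p : ℝ × ℝ) :
      triDens ((1, 1) - p).1 ((1, 1) - p).2 x₂ = triDens p.1 p.2 (1 - x₂) := by
    simpa using triDens_const_sub 1 p.1 p.2 (1 - x₂)
  have hint := integrableOn_triDens_restrictedRegion hγ
  simpa only [htranslate, hreflect] using!
    setIntegral_sub_setIntegral_comp_add_right (v := (x₂ - x₁, x₂ - x₁))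
      (measurableSet_restrictedRegion γ) (preimage_one_sub_restrictedRegion γ) (hint x₂)
      (by simpa only [htranslate] using hint x₁)

theorem abs_sub_midpoint_lt_of_mem_exitRegion (h₁₂ : x₁ < x₂) (h₂ : x₂ ≤ 1 / 2) {p : ℝ × ℝ}
    (hp : p ∈ exitRegion γ (x₂ - x₁)) :
    |1 - x₂ - (p.1 + p.2) / 2| < |x₁ - (p.1 + p.2) / 2| := by
  have hmid := one_sub_lt_add_of_mem_exitRegion (sub_nonneg.2 h₁₂.le) hp
  exact abs_sub_lt_abs_sub_of_midpoint_lt (by linarith) (by linarith)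

theorem integral_exitRegion_triDens_lt (hγ : γ ∈ Set.Ioo 0 1) (h₁ : 0 ≤ x₁) (h₁₂ : x₁ < x₂)
    (h₂ : x₂ ≤ 1 / 2) :
    ∫ p in exitRegion γ (x₂ - x₁), triDens p.1 p.2 x₁ <
      ∫ p in exitRegion γ (x₂ - x₁), triDens p.1 p.2 (1 - x₂) := by
  have hint (x : ℝ) := (integrableOn_triDens_restrictedRegion hγ.1 x).mono_set
    (Set.sdiff_subset : exitRegion γ (x₂ - x₁) ⊆ _)
  have hcloser {p : ℝ × ℝ} (hp : p ∈ exitRegion γ (x₂ - x₁)) :=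
    abs_sub_midpoint_lt_of_mem_exitRegion h₁₂ h₂ hp
  refine setIntegral_lt_setIntegral_of_le_of_measure_lt_pos (measurableSet_exitRegion γ _)
    (hint x₁) (hint (1 - x₂)) (fun p hp => triDens_le_triDens (hcloser hp).le) ?_
  refine (volume_exitRegion_straddling_pos (t := 1 - x₂) hγ.2 (sub_pos.2 h₁₂)
    ⟨by linarith, by linarith⟩).trans_le (measure_mono ?_)
  exact fun p ⟨hp, hstraddle⟩ => ⟨hp, triDens_lt_triDens (triDens_pos hstraddle) (hcloser hp)⟩

theorem phiGamma_one_sub (γ x : ℝ) : phiGamma γ (1 - x) = phiGamma γ x := by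
  have hreflect (p : ℝ × ℝ) :
      triDens ((1, 1) - p).1 ((1, 1) - p).2 (1 - x) = triDens p.1 p.2 x :=
    triDens_const_sub 1 p.1 p.2 x
  rw [phiGamma, phiGamma, ← setIntegral_comp_sub_left _ _ (1, 1),
    preimage_one_sub_restrictedRegion]
  simp only [hreflect]

theorem phiGamma_strictMonoOn (hγ : γ ∈ Set.Ioo 0 1) :
    StrictMonoOn (phiGamma γ) (Set.Icc 0 (1 / 2)) := by
  intro x₁ hx₁ x₂ hx₂ h₁₂
  have hscale : 0 < ((1 - γ) ^ 2)⁻¹ := inv_pos.2 (pow_pos (sub_pos.2 hγ.2) 2)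
  refine mul_lt_mul_of_pos_left (sub_pos.1 ?_) hscale
  rw [integral_triDens_sub_integral_triDens hγ.1]
  exact sub_pos.2 (integral_exitRegion_triDens_lt hγ hx₁.1 h₁₂ hx₂.2)

theorem phiGamma_strictAntiOn (hγ : γ ∈ Set.Ioo 0 1) :
    StrictAntiOn (phiGamma γ) (Set.Icc (1 / 2) 1) := by
  intro x₁ hx₁ x₂ hx₂ h₁₂
  rw [← phiGamma_one_sub γ x₁, ← phiGamma_one_sub γ x₂]
  exact phiGamma_strictMonoOn hγ ⟨by linarith [hx₂.2], by linarith [hx₂.1]⟩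
    ⟨by linarith [hx₁.2], by linarith [hx₁.1]⟩ (by linarith)

end IntensityDensity

/-- The restricted intensity density `φ_γ` is strictly increasing on `[0, 1/2]`
and strictly decreasing on `[1/2, 1]`. -/
theorem phiGamma_monotone (γ : ℝ) (hγ : γ ∈ Set.Ioo (0 : ℝ) 1) :
    (∀ x₁ x₂ : ℝ, 0 ≤ x₁ → x₁ < x₂ → x₂ ≤ 1 / 2 → phiGamma γ x₁ < phiGamma γ x₂)
    ∧ (∀ x₁ x₂ : ℝ, 1 / 2 ≤ x₁ → x₁ < x₂ → x₂ ≤ 1 → phiGamma γ x₂ < phiGamma γ x₁) := by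
  constructor
  · intro x₁ x₂ h₁ h₁₂ h₂
    exact phiGamma_strictMonoOn hγ ⟨h₁, h₁₂.le.trans h₂⟩ ⟨h₁.trans h₁₂.le, h₂⟩ h₁₂
  · intro x₁ x₂ h₁ h₁₂ h₂
    exact phiGamma_strictAntiOn hγ ⟨h₁, h₁₂.le.trans h₂⟩ ⟨h₁.trans h₁₂.le, h₂⟩ h₁₂
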